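/- Let X be a metric space, μ an Ahlfors s-regular Borel measure on X for some s ∈ (0,∞), (Y,ρ) a metric space, 0 ≤ r ≤ 1 and 0 < q < ∞ with rq ≤ s, and u ∈ B^r_{q,∞}(X,μ;Y). Then for any sequence ε_n > 0 with ε_n → 0 there exists a set D ⊂ X that is σ-finite with respect to the Hausdorff measure H^{s−rq} such that for every x ∈ X \ D one has liminf_{n→∞} ⨍_{B_{ε_n}(x)} ⨍_{B_{ε_n}(x)} ρ(u(z),u(y))^q dμ(y) dμ(z) = 0; in particular every point of X \ D is a general average Lebesgue point of u. -/

import Mathlib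

open MeasureTheory Metric Filter Set
open scoped ENNReal Topology

/-- A Borel measure `μ` on a metric space is Ahlfors `s`-regular:
there are constants `c, C > 0` with `c r^s ≤ μ (closedBall x r) ≤ C r^s`
for all `x` and `0 < r < diam X`. -/
def IsAhlfors {X : Type*} [MetricSpace X] [MeasurableSpace X]
    (μ : Measure X) (s : ℝ) : Prop :=
  ∃ c C : ℝ, 0 < c ∧ 0 < C ∧ ∀ (x : X) (ρ : ℝ), 0 < ρ →
    ENNReal.ofReal ρ < EMetric.diam (Set.univ : Set X) →
    ENNReal.ofReal (c * ρ ^ s) ≤ μ (closedBall x ρ) ∧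
      μ (closedBall x ρ) ≤ ENNReal.ofReal (C * ρ ^ s)

/-- `u ∈ B^r_{q,∞}(X,μ;Y)`: `u` is measurable, `F_u(x,z) = ρ(u x, u z)` is locally
`q`-integrable on `X × X`, and the Besov seminorm (to the power `q`) is finite. -/
def MemBesov {X Y : Type*} [MetricSpace X] [MeasurableSpace X] [MetricSpace Y]
    [MeasurableSpace Y] [BorelSpace Y]
    (μ : Measure X) (r q : ℝ) (u : X → Y) : Prop :=
  Measurable u ∧
  (∀ (x : X) (R : ℝ), 0 < R →
    ∫⁻ z in closedBall x R, ∫⁻ y in closedBall x R, edist (u z) (u y) ^ q ∂μ ∂μ < ⊤) ∧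
  (⨆ (t : ℝ) (_ : 0 < t),
    ∫⁻ x, (ENNReal.ofReal t ^ (r * q))⁻¹ *
      ((μ (closedBall x t))⁻¹ * ∫⁻ z in closedBall x t, edist (u x) (u z) ^ q ∂μ) ∂μ) < ⊤

/-- The double average `⨍_{B_ε(x)} ⨍_{B_ε(x)} W(z,y) dμ(z) dμ(y)`. -/
noncomputable def doubleAvg {X : Type*} [MetricSpace X] [MeasurableSpace X]
    (μ : Measure X) (W : X → X → ℝ≥0∞) (x : X) (ε : ℝ) : ℝ≥0∞ :=
  (μ (closedBall x ε))⁻¹ * (μ (closedBall x ε))⁻¹ *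
    ∫⁻ z in closedBall x ε, ∫⁻ y in closedBall x ε, W z y ∂μ ∂μ

/-!
Let `A` be a set on which the double averages at scale `e` are at least `δ`. The balls of radius `e`
around a `2e`-separated subset of `A` are disjoint and have measure comparable to `e^s`, and each
double average is controlled by the part over its ball of the Besov integral at scale `2e`, which
is at most `K (2e)^{rq}` in total. So `A` contains at most a constant times `e^{rq-s}` such points,
and a maximal `2e`-separated subset covers `A` by balls of radius `2e`. If this happens at all small
scales of the sequence, then `H^{s-rq}(A) < ∞`. The points where the liminf of the double averages
is positive form a countable union of such sets `A`.
-/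

section Covering

open scoped NNReal

theorem hausdorffMeasure_le_liminf_coveringNumber {X ι : Type*} [EMetricSpace X]
    [MeasurableSpace X] [BorelSpace X] {l : Filter ι} {d : ℝ} (hd : 0 ≤ d) (A : Set X)
    {ρ : ι → ℝ≥0} (hρ : Tendsto ρ l (𝓝 0)) (hfin : ∀ᶠ i in l, coveringNumber (ρ i) A ≠ ⊤) :
    μH[d] A ≤ liminf (fun i => (coveringNumber (ρ i) A : ℝ≥0∞) * (2 * ρ i) ^ d) l := by
  have hρ' : Tendsto (fun i => 2 * (ρ i : ℝ≥0∞)) l (𝓝 0) := by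
    simpa using ENNReal.Tendsto.const_mul (ENNReal.tendsto_coe.2 hρ) (.inr ENNReal.ofNat_ne_top)
  have hcount (i : ι) : Countable (minimalCover (ρ i) A) :=
    finite_minimalCover.countable.to_subtype
  calc
    μH[d] A ≤ liminf (fun i => ∑' x : minimalCover (ρ i) A, ediam (closedEBall (x : X) (ρ i)) ^ d)
        l := by
      refine Measure.hausdorffMeasure_le_liminf_tsum d A _ hρ' _
        (.of_forall fun _ _ => ediam_closedEBall_le) ?_
      filter_upwards [hfin] with i hi
      rw [← biUnion_eq_iUnion (t := fun x _ => closedEBall x (ρ i))]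
      exact isCover_iff_subset_iUnion_closedEBall.1 (isCover_minimalCover hi)
    _ ≤ liminf (fun i => (coveringNumber (ρ i) A : ℝ≥0∞) * (2 * ρ i) ^ d) l := by
      refine liminf_le_liminf ?_
      filter_upwards [hfin] with i hi
      rw [← encard_minimalCover hi, ← ENNReal.tsum_set_const]
      exact ENNReal.tsum_le_tsum fun _ => ENNReal.rpow_le_rpow ediam_closedEBall_le hd

theorem coe_packingNumber_le {X : Type*} [PseudoEMetricSpace X] {ρ : ℝ≥0} {A : Set X} {Q : ℝ≥0∞}
    (h : ∀ C ⊆ A, IsSeparated ρ C → (C.encard : ℝ≥0∞) ≤ Q) : (packingNumber ρ A : ℝ≥0∞) ≤ Q := by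
  simpa only [packingNumber, ENat.toENNReal_iSup, iSup_le_iff] using h

end Covering

theorem tsum_setLIntegral_le_lintegral {X ι : Type*} [MeasurableSpace X] (μ : Measure X)
    {S : ι → Set X} (hS : ∀ i, MeasurableSet (S i)) (hdisj : Pairwise (Function.onFun Disjoint S))
    (f : X → ℝ≥0∞) : ∑' i, ∫⁻ x in S i, f x ∂μ ≤ ∫⁻ x, f x ∂μ := by
  rw [ENNReal.tsum_eq_iSup_sum]
  refine iSup_le fun T => ?_
  rw [← lintegral_biUnion_finset (hdisj.set_pairwise _) fun i _ => hS i]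
  exact setLIntegral_le_lintegral _ _

theorem exists_iUnion_eq_setOf_liminf_ne_zero {X ι : Type*} (l : Filter ι)
    [l.IsCountablyGenerated] (f : ι → X → ℝ≥0∞) :
    ∃ F : ℕ → Set X, {x | liminf (fun i => f i x) l ≠ 0} = ⋃ n, F n ∧
      ∀ n, ∀ᶠ i in l, ∀ x ∈ F n, (n + 1 : ℝ≥0∞)⁻¹ ≤ f i x := by
  obtain ⟨B, hB⟩ := l.exists_antitone_basis
  refine ⟨fun n => {x | ∀ i ∈ B n, (n + 1 : ℝ≥0∞)⁻¹ ≤ f i x}, ?_, fun n => ?_⟩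
  · ext x
    simp only [mem_ofPred_eq, mem_iUnion]
    constructor
    · intro hx
      obtain ⟨k, hk⟩ := ENNReal.exists_inv_nat_lt hx
      obtain ⟨m, -, hm⟩ := hB.toHasBasis.eventually_iff.1 (eventually_lt_of_lt_liminf hk)
      refine ⟨max k m, fun i hi => le_trans ?_ (hm (hB.antitone (le_max_right k m) hi)).le⟩
      refine ENNReal.inv_le_inv.2 (le_trans ?_ le_self_add)
      exact_mod_cast le_max_left k m
    · rintro ⟨n, hn⟩
      have hle : (n + 1 : ℝ≥0∞)⁻¹ ≤ liminf (fun i => f i x) l :=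
        le_liminf_of_le (by isBoundedDefault) (hB.toHasBasis.eventually_iff.2 ⟨n, trivial, hn⟩)
      exact ((ENNReal.inv_pos.2 (by finiteness)).trans_le hle).ne'
  · filter_upwards [hB.toHasBasis.mem_of_mem trivial] with i hi x hx using hx i hi

theorem IsAhlfors.eventually_measure_closedBall {X : Type*} [MetricSpace X] [Nontrivial X]
    [MeasurableSpace X] {μ : Measure X} {s : ℝ} (hμ : IsAhlfors μ s) :
    ∃ c C : ℝ≥0∞, c ≠ 0 ∧ c ≠ ⊤ ∧ C ≠ ⊤ ∧ ∀ᶠ e in 𝓝[>] (0 : ℝ), ∀ x,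
      c * ENNReal.ofReal e ^ s ≤ μ (closedBall x e) ∧
        μ (closedBall x e) ≤ C * ENNReal.ofReal e ^ s := by
  obtain ⟨c, C, hc, hC, hball⟩ := hμ
  have hdiam : 0 < ediam (univ : Set X) := ediam_pos_iff.2 nontrivial_univ
  have hsmall : ∀ᶠ e in 𝓝[>] (0 : ℝ), ENNReal.ofReal e < ediam (univ : Set X) :=
    nhdsWithin_le_nhds <| (ENNReal.continuous_ofReal.tendsto' 0 0 ENNReal.ofReal_zero).eventually
      (gt_mem_nhds hdiam)
  refine ⟨ENNReal.ofReal c, ENNReal.ofReal C, (ENNReal.ofReal_pos.2 hc).ne',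
    ENNReal.ofReal_ne_top, ENNReal.ofReal_ne_top, ?_⟩
  filter_upwards [hsmall, self_mem_nhdsWithin] with e he hpos x
  rw [ENNReal.ofReal_rpow_of_pos hpos, ← ENNReal.ofReal_mul hc.le, ← ENNReal.ofReal_mul hC.le]
  exact hball x e hpos he

theorem IsAhlfors.eventually_doubling {X : Type*} [MetricSpace X] [Nontrivial X]
    [MeasurableSpace X] {μ : Measure X} {s : ℝ} (hμ : IsAhlfors μ s) :
    ∃ D : ℝ≥0∞, D ≠ ⊤ ∧ ∀ᶠ e in 𝓝[>] (0 : ℝ), ∀ x z,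
      μ (closedBall z (2 * e)) ≤ D * μ (closedBall x e) := by
  obtain ⟨c, C, hc0, hc, hC, hball⟩ := hμ.eventually_measure_closedBall
  refine ⟨C * 2 ^ s * c⁻¹, by finiteness, ?_⟩
  filter_upwards [hball, eventually_nhdsGT_zero_mul_left two_pos hball] with e he he2 x z
  calc
    μ (closedBall z (2 * e)) ≤ C * ENNReal.ofReal (2 * e) ^ s := (he2 z).2
    _ = C * (2 ^ s * ENNReal.ofReal e ^ s) := by
      rw [ENNReal.ofReal_mul zero_le_two, ENNReal.ofReal_ofNat,
        ENNReal.mul_rpow_of_ne_top ENNReal.ofNat_ne_top ENNReal.ofReal_ne_top]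
    _ = C * 2 ^ s * c⁻¹ * (c * ENNReal.ofReal e ^ s) := by
      rw [mul_assoc _ c⁻¹, ← mul_assoc c⁻¹, ENNReal.inv_mul_cancel hc0 hc, one_mul, mul_assoc]
    _ ≤ C * 2 ^ s * c⁻¹ * μ (closedBall x e) := by gcongr; exact (he x).1

/-- The integral over `x` of the averages of `W x` over `closedBall x t`. For
`W x z = ρ(u x, u z)^q` it is the integral in the Besov seminorm of `u` at scale `t`,
without the factor `t^{-rq}`. -/
noncomputable def scaleEnergy {X : Type*} [MetricSpace X] [MeasurableSpace X]
    (μ : Measure X) (W : X → X → ℝ≥0∞) (t : ℝ) : ℝ≥0∞ :=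
  ∫⁻ x, ⨍⁻ z in closedBall x t, W x z ∂μ ∂μ

theorem MemBesov.exists_scaleEnergy_le {X Y : Type*} [MetricSpace X] [MeasurableSpace X]
    [MetricSpace Y] [MeasurableSpace Y] [BorelSpace Y] {μ : Measure X} {r q : ℝ} {u : X → Y}
    (hu : MemBesov μ r q u) :
    ∃ K : ℝ≥0∞, K ≠ ⊤ ∧ ∀ t > 0,
      scaleEnergy μ (fun x z => edist (u x) (u z) ^ q) t ≤ K * ENNReal.ofReal t ^ (r * q) := by
  refine ⟨_, hu.2.2.ne, fun t ht => ?_⟩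
  have ht0 : ENNReal.ofReal t ^ (r * q) ≠ 0 :=
    (ENNReal.rpow_pos (ENNReal.ofReal_pos.2 ht) ENNReal.ofReal_ne_top).ne'
  have htt : ENNReal.ofReal t ^ (r * q) ≠ ⊤ :=
    ENNReal.rpow_ne_top_of_ne_zero (ENNReal.ofReal_pos.2 ht).ne' ENNReal.ofReal_ne_top
  rw [← ENNReal.div_le_iff ht0 htt, ENNReal.div_eq_inv_mul, scaleEnergy,
    ← lintegral_const_mul' _ _ (ENNReal.inv_ne_top.2 ht0)]
  simp only [setLAverage_eq, ENNReal.div_eq_inv_mul]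
  exact le_iSup₂_of_le t ht le_rfl

section DoubleAverage

variable {X : Type*} [MetricSpace X] [MeasurableSpace X] {μ : Measure X} {W : X → X → ℝ≥0∞}

theorem doubleAvg_eq_zero_of_subsingleton [Subsingleton X] (hW : ∀ x, W x x = 0) (x : X) (e : ℝ) :
    doubleAvg μ W x e = 0 := by
  have hzero (z y : X) : W z y = 0 := Subsingleton.elim z y ▸ hW z
  simp [doubleAvg, hzero]

variable [BorelSpace X] {s p : ℝ} {δ : ℝ≥0∞}

theorem doubleAvg_le_of_doubling {x : X} {e : ℝ} {D : ℝ≥0∞} (hD : D ≠ ⊤)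
    (hfin : μ (closedBall x e) ≠ ⊤)
    (hdoubling : ∀ z ∈ closedBall x e, μ (closedBall z (2 * e)) ≤ D * μ (closedBall x e)) :
    doubleAvg μ W x e ≤ (μ (closedBall x e))⁻¹ * D *
      ∫⁻ z in closedBall x e, ⨍⁻ y in closedBall z (2 * e), W z y ∂μ ∂μ := by
  set m := μ (closedBall x e)
  have hDm : D * m ≠ ⊤ := ENNReal.mul_ne_top hD hfin
  have hinner (z : X) (hz : z ∈ closedBall x e) :
      ∫⁻ y in closedBall x e, W z y ∂μ ≤ D * m * ⨍⁻ y in closedBall z (2 * e), W z y ∂μ := by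
    have hsub : closedBall x e ⊆ closedBall z (2 * e) :=
      closedBall_subset_closedBall' (by linarith [mem_closedBall'.1 hz])
    calc
      ∫⁻ y in closedBall x e, W z y ∂μ ≤ ∫⁻ y in closedBall z (2 * e), W z y ∂μ :=
        lintegral_mono_set hsub
      _ = μ (closedBall z (2 * e)) * ⨍⁻ y in closedBall z (2 * e), W z y ∂μ :=
        (measure_mul_setLAverage _ (ne_top_of_le_ne_top hDm (hdoubling z hz))).symm
      _ ≤ D * m * ⨍⁻ y in closedBall z (2 * e), W z y ∂μ := by gcongr; exact hdoubling z hz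
  calc
    doubleAvg μ W x e ≤ m⁻¹ * m⁻¹ *
        ∫⁻ z in closedBall x e, D * m * ⨍⁻ y in closedBall z (2 * e), W z y ∂μ ∂μ := by
      unfold doubleAvg
      exact mul_le_mul_right (setLIntegral_mono' measurableSet_closedBall hinner) _
    _ = m⁻¹ * m * (m⁻¹ * D *
        ∫⁻ z in closedBall x e, ⨍⁻ y in closedBall z (2 * e), W z y ∂μ ∂μ) := by
      rw [lintegral_const_mul' _ _ hDm]
      ring
    _ ≤ m⁻¹ * D * ∫⁻ z in closedBall x e, ⨍⁻ y in closedBall z (2 * e), W z y ∂μ ∂μ :=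
      mul_le_of_le_one_left' (ENNReal.inv_mul_le_one _)

theorem packingNumber_le_of_le_doubleAvg {A : Set X} {e : ℝ} {m D : ℝ≥0∞} (hD : D ≠ ⊤)
    (hfin : ∀ x ∈ A, μ (closedBall x e) ≠ ⊤) (hm : ∀ x ∈ A, m ≤ μ (closedBall x e))
    (hdoubling : ∀ x ∈ A, ∀ z ∈ closedBall x e,
      μ (closedBall z (2 * e)) ≤ D * μ (closedBall x e))
    (hδ0 : δ ≠ 0) (hδ : δ ≠ ⊤) (hA : ∀ x ∈ A, δ ≤ doubleAvg μ W x e) :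
    (packingNumber (2 * e).toNNReal A : ℝ≥0∞) ≤ m⁻¹ * D * scaleEnergy μ W (2 * e) / δ := by
  refine coe_packingNumber_le fun C hC hsep => ?_
  have hdisj : Pairwise (Function.onFun Disjoint fun x : C => closedBall (x : X) e) := by
    intro x y hxy
    refine closedBall_disjoint_closedBall ?_
    have hlt : ENNReal.ofReal (2 * e) < edist (x : X) y :=
      hsep x.2 y.2 (Subtype.coe_injective.ne hxy)
    rw [edist_dist, ENNReal.ofReal_lt_ofReal_iff'] at hlt
    linarith [hlt.1]
  rw [ENNReal.le_div_iff_mul_le (.inl hδ0) (.inl hδ)]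
  calc
    (C.encard : ℝ≥0∞) * δ = ∑' _ : C, δ := (ENNReal.tsum_set_const C δ).symm
    _ ≤ ∑' x : C, m⁻¹ * D *
        ∫⁻ z in closedBall (x : X) e, ⨍⁻ y in closedBall z (2 * e), W z y ∂μ ∂μ := by
      refine ENNReal.tsum_le_tsum fun x => (hA x (hC x.2)).trans ?_
      refine (doubleAvg_le_of_doubling hD (hfin x (hC x.2)) (hdoubling x (hC x.2))).trans ?_
      gcongr
      exact hm x (hC x.2)
    _ ≤ m⁻¹ * D * scaleEnergy μ W (2 * e) := by
      rw [ENNReal.tsum_mul_left]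
      gcongr
      exact tsum_setLIntegral_le_lintegral μ (fun _ => measurableSet_closedBall) hdisj _

theorem inv_rpow_mul_rpow_mul_rpow_sub {a : ℝ≥0∞} (ha0 : a ≠ 0) (ha : a ≠ ⊤) (s p : ℝ) :
    (a ^ s)⁻¹ * (2 * a) ^ p * (2 * (2 * a)) ^ (s - p) = 2 ^ p * 4 ^ (s - p) := by
  have hcancel : (a ^ s)⁻¹ * (a ^ p * a ^ (s - p)) = 1 := by
    rw [← ENNReal.rpow_add _ _ ha0 ha, add_sub_cancel,
      ENNReal.inv_mul_cancel (ENNReal.rpow_pos ha0.bot_lt ha).ne'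
        (ENNReal.rpow_ne_top_of_ne_zero ha0 ha)]
  have hfour : 2 * (2 * a) = 4 * a := by ring
  rw [hfour, ENNReal.mul_rpow_of_ne_top ENNReal.ofNat_ne_top ha,
    ENNReal.mul_rpow_of_ne_top ENNReal.ofNat_ne_top ha]
  calc
    _ = 2 ^ p * 4 ^ (s - p) * ((a ^ s)⁻¹ * (a ^ p * a ^ (s - p))) := by ring
    _ = 2 ^ p * 4 ^ (s - p) := by rw [hcancel, mul_one]

theorem IsAhlfors.eventually_packingNumber_mul_rpow_le [Nontrivial X] (hμ : IsAhlfors μ s)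
    {K : ℝ≥0∞} (hK : K ≠ ⊤)
    (hW : ∀ᶠ t in 𝓝[>] (0 : ℝ), scaleEnergy μ W t ≤ K * ENNReal.ofReal t ^ p)
    (hδ0 : δ ≠ 0) (hδ : δ ≠ ⊤) :
    ∃ Q : ℝ≥0∞, Q ≠ ⊤ ∧ ∀ᶠ e in 𝓝[>] (0 : ℝ), ∀ A : Set X,
      (∀ x ∈ A, δ ≤ doubleAvg μ W x e) →
        (packingNumber (2 * e).toNNReal A : ℝ≥0∞) * (2 * ENNReal.ofReal (2 * e)) ^ (s - p) ≤ Q := by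
  obtain ⟨c, C, hc0, hc, hC, hball⟩ := hμ.eventually_measure_closedBall
  obtain ⟨D, hD, hdoubling⟩ := hμ.eventually_doubling
  refine ⟨c⁻¹ * D * K / δ * (2 ^ p * 4 ^ (s - p)), by finiteness, ?_⟩
  filter_upwards [hball, hdoubling, eventually_nhdsGT_zero_mul_left two_pos hW,
    self_mem_nhdsWithin] with e hball hdoubling hW he A hA
  have he0 : ENNReal.ofReal e ≠ 0 := (ENNReal.ofReal_pos.2 he).ne'
  have hfin (x : X) : μ (closedBall x e) ≠ ⊤ :=
    ne_top_of_le_ne_top (by finiteness) (hball x).2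
  have h2e : ENNReal.ofReal (2 * e) = 2 * ENNReal.ofReal e := by
    rw [ENNReal.ofReal_mul zero_le_two, ENNReal.ofReal_ofNat]
  calc
    _ ≤ (c * ENNReal.ofReal e ^ s)⁻¹ * D * scaleEnergy μ W (2 * e) / δ *
        (2 * ENNReal.ofReal (2 * e)) ^ (s - p) := by
      gcongr
      exact packingNumber_le_of_le_doubleAvg hD (fun x _ => hfin x)
        (fun x _ => (hball x).1) (fun x _ z _ => hdoubling x z) hδ0 hδ hA
    _ ≤ (c * ENNReal.ofReal e ^ s)⁻¹ * D * (K * ENNReal.ofReal (2 * e) ^ p) / δ *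
        (2 * ENNReal.ofReal (2 * e)) ^ (s - p) := by
      gcongr
    _ = c⁻¹ * D * K / δ * ((ENNReal.ofReal e ^ s)⁻¹ * (2 * ENNReal.ofReal e) ^ p *
        (2 * (2 * ENNReal.ofReal e)) ^ (s - p)) := by
      rw [ENNReal.mul_inv (.inl hc0) (.inl hc), h2e]
      simp only [div_eq_mul_inv]
      ring
    _ = c⁻¹ * D * K / δ * (2 ^ p * 4 ^ (s - p)) := by
      rw [inv_rpow_mul_rpow_mul_rpow_sub he0 ENNReal.ofReal_ne_top]

theorem IsAhlfors.hausdorffMeasure_lt_top_of_eventually_le_doubleAvg [Nontrivial X]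
    (hμ : IsAhlfors μ s) (hps : p ≤ s) {K : ℝ≥0∞} (hK : K ≠ ⊤)
    (hW : ∀ᶠ t in 𝓝[>] (0 : ℝ), scaleEnergy μ W t ≤ K * ENNReal.ofReal t ^ p)
    {ι : Type*} {l : Filter ι} [l.NeBot] {ε : ι → ℝ} (hε : Tendsto ε l (𝓝[>] 0))
    (hδ0 : δ ≠ 0) (hδ : δ ≠ ⊤) {A : Set X}
    (hA : ∀ᶠ i in l, ∀ x ∈ A, δ ≤ doubleAvg μ W x (ε i)) :
    μH[s - p] A < ⊤ := by
  obtain ⟨Q, hQ, hpack⟩ := hμ.eventually_packingNumber_mul_rpow_le hK hW hδ0 hδ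
  have hcover : ∀ᶠ i in l, (coveringNumber (2 * ε i).toNNReal A : ℝ≥0∞) *
      (2 * ENNReal.ofReal (2 * ε i)) ^ (s - p) ≤ Q := by
    filter_upwards [hε.eventually hpack, hA] with i hpack hA
    refine le_trans ?_ (hpack A hA)
    gcongr
    exact coveringNumber_le_packingNumber _ _
  have hfin : ∀ᶠ i in l, coveringNumber (2 * ε i).toNNReal A ≠ ⊤ := by
    filter_upwards [hcover, hε.eventually self_mem_nhdsWithin] with i hi hpos htop
    have hne : (2 * ENNReal.ofReal (2 * ε i)) ^ (s - p) ≠ 0 :=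
      (ENNReal.rpow_pos (by simpa using hpos) (by finiteness)).ne'
    rw [htop, ENat.toENNReal_top, ENNReal.top_mul hne] at hi
    exact hQ (top_le_iff.1 hi)
  have hradius : Tendsto (fun i => (2 * ε i).toNNReal) l (𝓝 0) := by
    simpa using tendsto_real_toNNReal ((hε.mono_right nhdsWithin_le_nhds).const_mul 2)
  calc
    μH[s - p] A ≤ _ := hausdorffMeasure_le_liminf_coveringNumber (sub_nonneg.2 hps) A hradius hfin
    _ ≤ Q := liminf_le_of_frequently_le' hcover.frequently
    _ < ⊤ := hQ.lt_top

theorem statement0_general (hμ : IsAhlfors μ s) (hps : p ≤ s) (hW0 : ∀ x, W x x = 0)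
    {K : ℝ≥0∞} (hK : K ≠ ⊤)
    (hW : ∀ᶠ t in 𝓝[>] (0 : ℝ), scaleEnergy μ W t ≤ K * ENNReal.ofReal t ^ p)
    {ι : Type*} {l : Filter ι} [l.NeBot] [l.IsCountablyGenerated] {ε : ι → ℝ}
    (hε : Tendsto ε l (𝓝[>] 0)) :
    ∃ D : Set X, (∃ F : ℕ → Set X, D = ⋃ n, F n ∧ ∀ n, μH[s - p] (F n) < ⊤) ∧
      ∀ x ∉ D, liminf (fun i => doubleAvg μ W x (ε i)) l = 0 := by
  rcases subsingleton_or_nontrivial X with _ | _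
  · refine ⟨∅, ⟨fun _ => ∅, by simp, by simp⟩, fun x _ => ?_⟩
    simp only [doubleAvg_eq_zero_of_subsingleton hW0, liminf_const]
  · obtain ⟨F, hF, hlarge⟩ :=
      exists_iUnion_eq_setOf_liminf_ne_zero l fun i x => doubleAvg μ W x (ε i)
    refine ⟨_, ⟨F, hF, fun n => ?_⟩, fun x hx => not_not.1 hx⟩
    exact hμ.hausdorffMeasure_lt_top_of_eventually_le_doubleAvg hps hK hW hε
      (ENNReal.inv_ne_zero.2 (by finiteness)) (ENNReal.inv_ne_top.2 (by simp)) (hlarge n)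

end DoubleAverage

/-- General average Lebesgue points of Besov functions: outside a set `D` which is
`σ`-finite with respect to `H^{s-rq}`, along any fixed sequence `ε_n → 0⁺` the
double averages of `ρ(u z, u y)^q` have liminf `0`. -/
theorem statement0 {X Y : Type*} [MetricSpace X] [MeasurableSpace X] [BorelSpace X]
    [MetricSpace Y] [MeasurableSpace Y] [BorelSpace Y] (μ : Measure X) (s r q : ℝ) (hs : 0 < s)
    (hμ : IsAhlfors μ s) (hr0 : 0 ≤ r) (hr1 : r ≤ 1) (hq : 0 < q) (hrq : r * q ≤ s)
    (u : X → Y) (hu : MemBesov μ r q u)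
    (ε : ℕ → ℝ) (hε : ∀ n, 0 < ε n) (hεlim : Tendsto ε atTop (𝓝 0)) :
    ∃ D : Set X, (∃ F : ℕ → Set X, D = ⋃ n, F n ∧ ∀ n, μH[s - r * q] (F n) < ⊤) ∧
      ∀ x ∉ D,
        liminf (fun n => doubleAvg μ (fun z y => edist (u z) (u y) ^ q) x (ε n)) atTop = 0 := by
  obtain ⟨K, hK, hKu⟩ := hu.exists_scaleEnergy_le
  exact statement0_general hμ hrq (by simp [hq]) hK (eventually_nhdsWithin_of_forall hKu)
    (tendsto_nhdsWithin_iff.2 ⟨hεlim, .of_forall hε⟩)
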